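/- The single-conclusion logic ⊢_⊞ is not finitely axiomatizable: there is no finite set R of single-conclusion rules, each having a finite set of premises, such that ⊢_R = ⊢_⊞. -/

import Mathlib

/-- Formulas built from countably many propositional variables with a single
binary connective `⊞` (platypus). -/
inductive Fm : Type where
  | var : ℕ → Fm
  | pl : Fm → Fm → Fm
deriving DecidableEq

namespace Fm

/-- The set of propositional variables occurring in a formula. -/
def vars : Fm → Set ℕ
  | var n => {n}
  | pl a b => vars a ∪ vars b

/-- A `𝔅_⊞`-valuation: a two-valued function such that
`v (φ ⊞ ψ) ∈ {min (v φ) (v ψ), max (v φ) (v ψ)}`. -/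
def IsVal (v : Fm → Bool) : Prop :=
  ∀ a b : Fm, v (a.pl b) = (v a && v b) ∨ v (a.pl b) = (v a || v b)

/-- The multiple-conclusion consequence `Γ ⊩_⊞ Δ`. -/
def Mc (Γ Δ : Set Fm) : Prop :=
  ∀ v : Fm → Bool, IsVal v → (∀ φ ∈ Γ, v φ = true) → ∃ ψ ∈ Δ, v ψ = true

/-- The single-conclusion consequence `Γ ⊢_⊞ φ`. -/
def Sc (Γ : Set Fm) (φ : Fm) : Prop := Mc Γ {φ}

end Fm

namespace Fm

/-- Homomorphic extension of a substitution `σ : P → L_⊞` to formulas. -/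
def subst (σ : ℕ → Fm) : Fm → Fm
  | var n => σ n
  | pl a b => (subst σ a).pl (subst σ b)

/-- Hilbert derivability from a set `R` of single-conclusion rules: `φ`
belongs to the smallest set containing `Γ` and closed under substitution
instances of the rules in `R`. -/
inductive Der (R : Set (Set Fm × Fm)) (Γ : Set Fm) : Fm → Prop
  | prem {φ : Fm} : φ ∈ Γ → Der R Γ φ
  | app {Prem : Set Fm} {ψ : Fm} (σ : ℕ → Fm) : (Prem, ψ) ∈ R →
      (∀ π ∈ Prem, Der R Γ (subst σ π)) → Der R Γ (subst σ ψ)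

end Fm

/-!
The chains `p ⊞ (p ⊞ (⋯ ⊞ p))` all entail `p`. To see that sound rules of bounded size cannot derive
`p` from the chain with `n` connectives, assign to every formula a rank, equal to `n` on that chain
and to `0` on variables, and color the ranks by truth values so that all ranks `≥ n` are true
while a given rank `m < n` is false. The coloring can be made to respect the truth table of `⊞`
except at formulas of one rank `f`, and `1 ≤ f ≤ n` can be chosen freely. An instance of a rule
with fewer than `n` subformulas misses some such `f`, so it only sees a genuine valuation: if its
premises have rank `≥ n`, its conclusion cannot have rank `m`.
-/

namespace Fm

theorem isVal_iff {v : Fm → Bool} : IsVal v ↔ ∀ a b, v a = v b → v (a.pl b) = v a := by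
  refine forall₂_congr fun a b => ?_
  cases v a <;> cases v b <;> cases v (a.pl b) <;> decide

theorem sc_iff {Γ : Set Fm} {φ : Fm} :
    Sc Γ φ ↔ ∀ v, IsVal v → (∀ γ ∈ Γ, v γ = true) → v φ = true := by
  simp only [Sc, Mc, Set.mem_singleton_iff, exists_eq_left]

theorem subst_var (φ : Fm) : subst var φ = φ := by
  induction φ with
  | var n => rfl
  | pl a b iha ihb => rw [subst, iha, ihb]

theorem der_of_mem {R : Set (Set Fm × Fm)} {Γ : Set Fm} {φ : Fm} (h : (Γ, φ) ∈ R) : Der R Γ φ := by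
  have identity_instance := Der.app (Γ := Γ) var h fun γ hγ => by rw [subst_var]; exact Der.prem hγ
  rwa [subst_var] at identity_instance

/-- The finite set of subformulas of a formula, the formula itself included. -/
def subformulas : Fm → Finset Fm
  | var n => {var n}
  | pl a b => insert (pl a b) (subformulas a ∪ subformulas b)

/-- Closure of a set of formulas under immediate, hence under all, subformulas. -/
def SubformulaClosed (S : Set Fm) : Prop :=
  ∀ ⦃a b : Fm⦄, a.pl b ∈ S → a ∈ S ∧ b ∈ S

theorem mem_subformulas_self (φ : Fm) : φ ∈ subformulas φ := by
  cases φ <;> simp [subformulas]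

theorem subformulaClosed_subformulas (φ : Fm) : SubformulaClosed (subformulas φ) := by
  induction φ with
  | var n => intro a b h; simp [subformulas] at h
  | pl c d ihc ihd =>
    intro a b h
    simp only [subformulas, Finset.mem_coe, Finset.mem_insert, Finset.mem_union, pl.injEq] at h ⊢
    rcases h with ⟨rfl, rfl⟩ | hc | hd
    · simp [mem_subformulas_self]
    · exact ⟨.inr (.inl (ihc hc).1), .inr (.inl (ihc hc).2)⟩
    · exact ⟨.inr (.inr (ihd hd).1), .inr (.inr (ihd hd).2)⟩

theorem exists_finset_subformulaClosed {Γ : Set Fm} (hΓ : Γ.Finite) :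
    ∃ S : Finset Fm, Γ ⊆ S ∧ SubformulaClosed S := by
  refine ⟨hΓ.toFinset.biUnion subformulas, fun γ hγ => ?_, fun a b hab => ?_⟩
  · exact Finset.mem_biUnion.2 ⟨γ, hΓ.mem_toFinset.2 hγ, mem_subformulas_self γ⟩
  · obtain ⟨γ, hγ, habγ⟩ := Finset.mem_biUnion.1 hab
    obtain ⟨ha, hb⟩ := subformulaClosed_subformulas γ habγ
    exact ⟨Finset.mem_biUnion.2 ⟨γ, hγ, ha⟩, Finset.mem_biUnion.2 ⟨γ, hγ, hb⟩⟩

open Classical in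
/-- The extension of a partial valuation `e` on `S` to all formulas: variables keep their value
under `e`, and `⊞` is read as conjunction outside `S`. -/
noncomputable def extendVal (S : Set Fm) (e : Fm → Bool) : Fm → Bool
  | var n => e (var n)
  | pl a b => if a.pl b ∈ S then e (a.pl b) else extendVal S e a && extendVal S e b

theorem extendVal_of_mem {S : Set Fm} (e : Fm → Bool) {φ : Fm} (hφ : φ ∈ S) :
    extendVal S e φ = e φ := by
  cases φ with
  | var n => rfl
  | pl a b => rw [extendVal, if_pos hφ]

theorem isVal_extendVal {S : Set Fm} (hS : SubformulaClosed S) {e : Fm → Bool}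
    (he : ∀ a b, a.pl b ∈ S → e a = e b → e (a.pl b) = e a) : IsVal (extendVal S e) := by
  rw [isVal_iff]
  intro a b hab
  by_cases hmem : a.pl b ∈ S
  · obtain ⟨ha, hb⟩ := hS hmem
    rw [extendVal_of_mem e ha, extendVal_of_mem e hb] at hab
    rw [extendVal_of_mem e hmem, extendVal_of_mem e ha, he a b hmem hab]
  · rw [extendVal, if_neg hmem, ← hab, Bool.and_self]

/-- The right-nested chain `p ⊞ (p ⊞ (⋯ ⊞ p))` with `n` connectives, where `p` is `var 0`. -/
def chain : ℕ → Fm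
  | 0 => var 0
  | n + 1 => (var 0).pl (chain n)

theorem sc_chain (n : ℕ) : Sc {chain n} (var 0) := by
  rw [sc_iff]
  intro v hv hchain
  have chain_eq (k : ℕ) : v (chain k) = v (var 0) := by
    induction k with
    | zero => rfl
    | succ k ih => exact isVal_iff.1 hv _ _ ih.symm
  rw [← chain_eq n]
  exact hchain _ rfl

/-- A measure of chain length: `⊞` adds one to the rank of its right argument when the left argument
has rank `0`, as a variable does, and otherwise takes the minimum. In the latter case every
coloring of the ranks by truth values gives `a ⊞ b` the color of `a` or of `b`. -/
def rank : Fm → ℕ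
  | var _ => 0
  | pl a b => if rank a = 0 then rank b + 1 else min (rank a) (rank b)

theorem rank_chain (n : ℕ) : rank (chain n) = n := by
  induction n with
  | zero => rfl
  | succ n ih => rw [chain, rank, rank, if_pos rfl, ih]

/-- A coloring of the ranks by truth values that respects the truth table of `⊞`, read with a left
argument of rank `0`, at every step `l ↦ l + 1` except the one ending in `f`. -/
def IsColoringExceptAt (f : ℕ) (g : ℕ → Bool) : Prop :=
  ∀ l, l + 1 ≠ f → g l = g 0 → g (l + 1) = g 0

theorem exists_isColoringExceptAt {n f m : ℕ} (hf : 1 ≤ f) (hfn : f ≤ n) (hmn : m < n) :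
    ∃ g, IsColoringExceptAt f g ∧ g m = false ∧ ∀ l, n ≤ l → g l = true := by
  rcases lt_or_ge m f with hmf | hfm
  · refine ⟨fun l => decide (f ≤ l), fun l hl h => ?_, decide_eq_false (by omega),
      fun l hl => decide_eq_true (by omega)⟩
    rw [decide_eq_decide] at h ⊢
    omega
  · refine ⟨fun l => decide (l < f ∨ m < l), fun l hl h => ?_, decide_eq_false (by omega),
      fun l hl => decide_eq_true (by omega)⟩
    rw [decide_eq_decide] at h ⊢
    omega

theorem IsColoringExceptAt.rank_pl {f : ℕ} {g : ℕ → Bool} (hg : IsColoringExceptAt f g)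
    {a b : Fm} (hne : rank (a.pl b) ≠ f) (hab : g (rank a) = g (rank b)) :
    g (rank (a.pl b)) = g (rank a) := by
  rw [rank] at hne ⊢
  split_ifs at hne ⊢ with ha
  · rw [ha] at hab ⊢
    exact hg _ hne hab.symm
  · rcases min_choice (rank a) (rank b) with h | h <;> rw [h]
    exact hab.symm

theorem exists_mem_Icc_forall_apply_ne {α : Type*} {S : Finset α} {n : ℕ} (hn : S.card < n)
    (h : α → ℕ) : ∃ f ∈ Finset.Icc 1 n, ∀ x ∈ S, h x ≠ f := by
  have card_lt : (S.image h).card < (Finset.Icc 1 n).card := by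
    simpa using Finset.card_image_le.trans_lt hn
  obtain ⟨f, hf, hfS⟩ := Finset.exists_mem_notMem_of_card_lt_card card_lt
  exact ⟨f, hf, fun x hx hxf => hfS (Finset.mem_image.2 ⟨x, hx, hxf⟩)⟩

section BoundedRules

variable {S : Finset Fm} {n : ℕ}

theorem le_rank_subst_of_sc (hS : SubformulaClosed S) (hn : S.card < n) {Γ : Set Fm} {ψ : Fm}
    (hΓ : Γ ⊆ S) (hψ : ψ ∈ S) (hsc : Sc Γ ψ) {σ : ℕ → Fm}
    (hrank : ∀ γ ∈ Γ, n ≤ rank (subst σ γ)) : n ≤ rank (subst σ ψ) := by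
  by_contra! hlt
  obtain ⟨f, hf, hf_ne⟩ := exists_mem_Icc_forall_apply_ne hn fun φ => rank (subst σ φ)
  obtain ⟨hf_pos, hf_le⟩ := Finset.mem_Icc.1 hf
  obtain ⟨g, hg, hg_false, hg_true⟩ := exists_isColoringExceptAt hf_pos hf_le hlt
  let e : Fm → Bool := fun φ => g (rank (subst σ φ))
  have isVal : IsVal (extendVal S e) :=
    isVal_extendVal hS fun a b hmem hab => hg.rank_pl (hf_ne _ hmem) hab
  have premises_true (γ : Fm) (hγ : γ ∈ Γ) : extendVal S e γ = true := by
    rw [extendVal_of_mem e (hΓ hγ)]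
    exact hg_true _ (hrank γ hγ)
  have conclusion_true := sc_iff.1 hsc _ isVal premises_true
  rw [extendVal_of_mem e hψ] at conclusion_true
  exact Bool.false_ne_true (hg_false.symm.trans conclusion_true)

theorem le_rank_of_der {R : Set (Set Fm × Fm)} (hS : SubformulaClosed S) (hn : S.card < n)
    (hRS : ∀ r ∈ R, r.1 ⊆ S ∧ r.2 ∈ S) (hsound : ∀ r ∈ R, Sc r.1 r.2) {Γ : Set Fm} {φ : Fm}
    (hΓ : ∀ γ ∈ Γ, n ≤ rank γ) (hder : Der R Γ φ) : n ≤ rank φ := by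
  induction hder with
  | prem hφ => exact hΓ _ hφ
  | app σ hr _ ih => exact le_rank_subst_of_sc hS hn (hRS _ hr).1 (hRS _ hr).2 (hsound _ hr) ih

end BoundedRules

theorem exists_finset_subformulaClosed_of_rules {R : Set (Set Fm × Fm)} (hR : R.Finite)
    (hprem : ∀ r ∈ R, r.1.Finite) :
    ∃ S : Finset Fm, SubformulaClosed S ∧ ∀ r ∈ R, r.1 ⊆ S ∧ r.2 ∈ S := by
  have finite_formulas : (⋃ r ∈ R, insert r.2 r.1).Finite :=
    hR.biUnion fun r hr => (hprem r hr).insert r.2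
  obtain ⟨S, hsub, hS⟩ := exists_finset_subformulaClosed finite_formulas
  have rule_subset (r) (hr : r ∈ R) : insert r.2 r.1 ⊆ (S : Set Fm) :=
    (Set.subset_biUnion_of_mem (u := fun r : Set Fm × Fm => insert r.2 r.1) hr).trans hsub
  exact ⟨S, hS, fun r hr => (Set.insert_subset_iff.1 (rule_subset r hr)).symm⟩

end Fm

open Fm in
/-- `⊢_⊞` is not finitely axiomatizable: no finite set of
single-conclusion rules with finitely many premises axiomatizes it. -/
theorem platypus_not_finitely_axiomatizable :
    ¬ ∃ R : Set (Set Fm × Fm), R.Finite ∧ (∀ r ∈ R, r.1.Finite) ∧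
      ∀ (Γ : Set Fm) (φ : Fm), Der R Γ φ ↔ Sc Γ φ := by
  rintro ⟨R, hR, hprem, hax⟩
  obtain ⟨S, hS, hRS⟩ := exists_finset_subformulaClosed_of_rules hR hprem
  have sound (r) (hr : r ∈ R) : Sc r.1 r.2 := (hax _ _).1 (der_of_mem hr)
  let n := S.card + 1
  have derivable : Der R {chain n} (var 0) := (hax _ _).2 (sc_chain n)
  have chain_rank : ∀ γ ∈ ({chain n} : Set Fm), n ≤ rank γ := by
    rintro _ rfl
    exact (rank_chain n).ge
  have n_le_zero : n ≤ rank (var 0) :=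
    le_rank_of_der hS S.card.lt_succ_self hRS sound chain_rank derivable
  exact absurd n_le_zero (Nat.not_succ_le_zero _)
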